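/- Let $b$ and $\varepsilon$ be real numbers with $b \ge 2$ and $0 < \varepsilon < 1/2$, where $\varepsilon$ is an inverse power of $2$ (that is, $\varepsilon = 2^{-m}$ for some natural number $m$), and set $c = \frac{1}{b\sqrt{\varepsilon}}$. Then for every natural number $k \ge 1$, $$\varepsilon^k \sum_{i=1}^{k} \frac{c^i}{i!} < \frac{k}{2^{3k/2}}.$$ -/

import Mathlib

/-!
Distributing `eps ^ k` over the sum, the `i`-th term is `(eps * c) ^ i * eps ^ (k - i) / i!`. If
`eps ≤ r` and `eps * c = √eps / b < r`, then each of the `k` terms is less than `r ^ k`, so the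
whole is less than `k * r ^ k`. The choice `r = √(1 / 8)` turns this into `k / 2 ^ (3 * k / 2)`,
and the two conditions, squared, become `8 * eps ^ 2 ≤ 1` and `8 * eps < b ^ 2`. An inverse power
of two below `1 / 2` is at most `1 / 4` and so satisfies both when `2 ≤ b`.
-/

section TruncatedPowerSeries

variable {R : Type*} [SeminormedCommRing R] [NormOneClass R] {x c : R} {r : ℝ} {k : ℕ}

lemma norm_pow_mul_mul_pow_lt {a : R} {i : ℕ} (ha : ‖a‖ ≤ 1) (hx : ‖x‖ ≤ r)
    (hxc : ‖x * c‖ < r) (hi : i ≠ 0) (hik : i ≤ k) : ‖x ^ k * (a * c ^ i)‖ < r ^ k := by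
  obtain ⟨j, rfl⟩ := Nat.exists_eq_add_of_le hik
  have hr : 0 < r := (norm_nonneg _).trans_lt hxc
  calc ‖x ^ (i + j) * (a * c ^ i)‖
      = ‖a * ((x * c) ^ i * x ^ j)‖ := by ring_nf
    _ ≤ ‖a‖ * (‖(x * c) ^ i‖ * ‖x ^ j‖) :=
        (norm_mul_le _ _).trans (by gcongr; exact norm_mul_le _ _)
    _ ≤ 1 * (‖x * c‖ ^ i * r ^ j) := by
        gcongr
        · exact norm_pow_le _ _
        · exact (norm_pow_le _ _).trans (by gcongr)
    _ < 1 * (r ^ i * r ^ j) := by gcongr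
    _ = r ^ (i + j) := by rw [one_mul, pow_add]

lemma norm_pow_mul_sum_Icc_mul_pow_lt {a : ℕ → R} (ha : ∀ i ∈ Finset.Icc 1 k, ‖a i‖ ≤ 1)
    (hx : ‖x‖ ≤ r) (hxc : ‖x * c‖ < r) (hk : 1 ≤ k) :
    ‖x ^ k * ∑ i ∈ Finset.Icc 1 k, a i * c ^ i‖ < k * r ^ k := by
  have term_lt : ∀ i ∈ Finset.Icc 1 k, ‖x ^ k * (a i * c ^ i)‖ < r ^ k := fun i hi ↦
    have ⟨one_le, le_k⟩ := Finset.mem_Icc.mp hi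
    norm_pow_mul_mul_pow_lt (ha i hi) hx hxc (Nat.one_le_iff_ne_zero.mp one_le) le_k
  calc ‖x ^ k * ∑ i ∈ Finset.Icc 1 k, a i * c ^ i‖
      ≤ ∑ i ∈ Finset.Icc 1 k, ‖x ^ k * (a i * c ^ i)‖ := by
        rw [Finset.mul_sum]
        exact norm_sum_le _ _
    _ < ∑ _i ∈ Finset.Icc 1 k, r ^ k :=
        Finset.sum_lt_sum_of_nonempty (Finset.nonempty_Icc.mpr hk) term_lt
    _ = k * r ^ k := by simp

end TruncatedPowerSeries

lemma pow_mul_sum_Icc_pow_div_factorial_lt {x c r : ℝ} {k : ℕ} (hx : |x| ≤ r)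
    (hxc : |x * c| < r) (hk : 1 ≤ k) :
    x ^ k * ∑ i ∈ Finset.Icc 1 k, c ^ i / (i.factorial : ℝ) < k * r ^ k := by
  have norm_inv_factorial_le (i : ℕ) : ‖(i.factorial : ℝ)⁻¹‖ ≤ 1 := by
    rw [norm_inv, Real.norm_natCast]
    exact inv_le_one_of_one_le₀ (mod_cast i.factorial_pos)
  simp only [div_eq_inv_mul]
  exact (Real.le_norm_self _).trans_lt
    (norm_pow_mul_sum_Icc_mul_pow_lt (fun i _ ↦ norm_inv_factorial_le i) hx hxc hk)

lemma mul_one_div_mul_sqrt (b x : ℝ) : x * (1 / (b * √x)) = √x / b := by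
  rw [mul_one_div, mul_comm b, ← div_div, Real.div_sqrt]

lemma abs_sqrt_div_lt_sqrt {b x y : ℝ} (hx : 0 ≤ x) (hb : b ≠ 0) (h : x < y * b ^ 2) :
    |√x / b| < √y := by
  rw [Real.lt_sqrt (abs_nonneg _), sq_abs, div_pow, Real.sq_sqrt hx]
  exact (div_lt_iff₀ (by positivity)).mpr h

lemma rpow_mul_div_two_eq_sqrt_rpow {x : ℝ} (hx : 0 ≤ x) (y z : ℝ) :
    x ^ (y * z / 2) = √(x ^ y) ^ z := by
  rw [mul_div_assoc, Real.rpow_mul hx, Real.rpow_div_two_eq_sqrt _ (Real.rpow_nonneg hx y)]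

theorem stmt_10_general {b eps c : ℝ} (heps0 : 0 < eps) (heps : 8 * eps ^ 2 ≤ 1)
    (hb : 8 * eps < b ^ 2) (hc : c = 1 / (b * √eps)) {k : ℕ} (hk : 1 ≤ k) :
    eps ^ k * ∑ i ∈ Finset.Icc 1 k, c ^ i / (i.factorial : ℝ) <
      (k : ℝ) / (2 : ℝ) ^ (3 * (k : ℝ) / 2) := by
  have hb0 : b ≠ 0 := by
    rintro rfl
    linarith
  have eps_le : |eps| ≤ √(1 / 8) := Real.abs_le_sqrt (by linarith)
  have eps_mul_c_lt : |eps * c| < √(1 / 8) := by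
    rw [hc, mul_one_div_mul_sqrt]
    exact abs_sqrt_div_lt_sqrt heps0.le hb0 (by linarith)
  have two_rpow : (2 : ℝ) ^ (3 * (k : ℝ) / 2) = √8 ^ k := by
    rw [rpow_mul_div_two_eq_sqrt_rpow zero_le_two, Real.rpow_natCast]
    norm_num
  calc eps ^ k * ∑ i ∈ Finset.Icc 1 k, c ^ i / (i.factorial : ℝ)
      < k * √(1 / 8) ^ k := pow_mul_sum_Icc_pow_div_factorial_lt eps_le eps_mul_c_lt hk
    _ = k / (2 : ℝ) ^ (3 * (k : ℝ) / 2) := by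
        rw [two_rpow, one_div, Real.sqrt_inv, inv_pow, ← div_eq_mul_inv]

/-- With `b ≥ 2`, `eps < 1/2` an inverse power of two and `c = 1/(b * sqrt eps)`, for every
`k ≥ 1`, `eps^k * ∑_{i=1}^{k} c^i / i! < k / 2^(3k/2)`. -/
theorem stmt_10 (b eps : ℝ) (hb : 2 ≤ b) (heps0 : 0 < eps) (heps1 : eps < 1 / 2)
    (hpow : ∃ m : ℕ, eps = 1 / (2 : ℝ) ^ m)
    (c : ℝ) (hc : c = 1 / (b * Real.sqrt eps)) (k : ℕ) (hk : 1 ≤ k) :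
    eps ^ k * ∑ i ∈ Finset.Icc 1 k, c ^ i / (Nat.factorial i : ℝ) <
      (k : ℝ) / (2 : ℝ) ^ ((3 * (k : ℝ)) / 2) := by
  have eps_le : eps ≤ 1 / 2 ^ 2 := by
    obtain ⟨m, rfl⟩ := hpow
    have one_lt_m : 1 < m :=
      (one_div_pow_anti (one_le_two (α := ℝ))).reflect_lt (by simpa only [pow_one] using heps1)
    exact one_div_pow_le_one_div_pow_of_le one_le_two one_lt_m
  exact stmt_10_general heps0 (by nlinarith) (by nlinarith) hc hk
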